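/- Let d ≥ 2, δ ≥ 2, and 0 < s < d be integers, and let G be a finite simple graph with a proper white/black 2-coloring. Suppose there exists a set X of edges of G such that every white vertex of degree exactly d is incident to a number of edges of X different from s, and every black vertex of degree exactly δ is incident to at least 1 and at most δ−1 edges of X. Then there exists a labeling of the edges of G solving FDSO(s). -/

import Mathlib

/-- The four-letter alphabet `Σ = {A, H, T, X}`. -/
inductive Sig : Type
  | A | H | T | X
deriving DecidableEq

instance instFintypeSig : Fintype Sig where
  elems := {Sig.A, Sig.H, Sig.T, Sig.X}
  complete := by intro x; cases x <;> decide

/-- The multiset of labels assigned by `c` to the edges incident to `v`. -/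
def edgeLabels {V : Type*} [Fintype V] [DecidableEq V] (G : SimpleGraph V)
    [DecidableRel G.Adj] (c : Sym2 V → Sig) (v : V) : Multiset Sig :=
  (G.neighborFinset v).val.map (fun u => c s(v, u))

/-- The edge labeling `c` solves `FDSO(s)` on the properly 2-colored graph `G`: every white
vertex of degree exactly `d` sees one `A` and `d-1` `X`'s, or `s+1` `H`'s and `d-s-1` `X`'s,
or `d-s+1` `T`'s and `s-1` `X`'s; every black vertex of degree exactly `δ` sees at least one
`X`, or at least one `H` and at least one `T`. -/
def SolvesFDSO {V : Type*} [Fintype V] [DecidableEq V] (G : SimpleGraph V)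
    [DecidableRel G.Adj] (color : V → Bool) (d δ s : ℕ) (c : Sym2 V → Sig) : Prop :=
  (∀ v : V, color v = true → G.degree v = d →
    (edgeLabels G c v = Sig.A ::ₘ Multiset.replicate (d - 1) Sig.X ∨
     edgeLabels G c v =
       Multiset.replicate (s + 1) Sig.H + Multiset.replicate (d - s - 1) Sig.X ∨
     edgeLabels G c v =
       Multiset.replicate (d - s + 1) Sig.T + Multiset.replicate (s - 1) Sig.X)) ∧
  (∀ v : V, color v = false → G.degree v = δ →
    (Sig.X ∈ edgeLabels G c v ∨
      (Sig.H ∈ edgeLabels G c v ∧ Sig.T ∈ edgeLabels G c v)))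

/-- The number of edges of `X` incident to `v` (edges of the graph `G`). -/
def degIn {V : Type*} [Fintype V] [DecidableEq V] (G : SimpleGraph V) [DecidableRel G.Adj]
    (X : Finset (Sym2 V)) (v : V) : ℕ :=
  ((G.neighborFinset v).filter (fun u => s(v, u) ∈ X)).card

theorem map_ite_aux {V : Type*} [DecidableEq V] (N S : Finset V) (h : S ⊆ N) (a b : Sig) :
    N.val.map (fun u => if u ∈ S then a else b) =
      Multiset.replicate S.card a + Multiset.replicate (N.card - S.card) b := by
  have h1 : N.val = S.val + (N \ S).val := by
    rw [Finset.sdiff_val, add_tsub_cancel_of_le (Finset.val_le_iff.mpr h)]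
  rw [h1, Multiset.map_add]
  congr 1
  · rw [Multiset.map_congr rfl (g := fun _ => a), Multiset.map_const', Finset.card_val]
    intro x hx
    rw [if_pos (by simpa using hx)]
  · rw [Multiset.map_congr rfl (g := fun _ => b), Multiset.map_const', Finset.card_val,
      Finset.card_sdiff_of_subset h]
    intro x hx
    have hx2 : x ∈ N \ S := hx
    rw [if_neg (Finset.mem_sdiff.mp hx2).2]

/-- If a properly 2-colored finite graph admits a solution to the forbidden
degree problem with forbidden degree `s` (white degree-`d` vertices incident to a number of
edges of `X` different from `s`; black degree-`δ` vertices incident to at least `1` and at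
most `δ-1` edges of `X`), then it admits an edge labeling solving `FDSO(s)`. -/
theorem stmt_17 {V : Type*} [Fintype V] [DecidableEq V]
    (G : SimpleGraph V) [DecidableRel G.Adj]
    (d δ s : ℕ) (hd : 2 ≤ d) (hδ : 2 ≤ δ) (hs0 : 0 < s) (hsd : s < d)
    (color : V → Bool)
    (hproper : ∀ ⦃u v : V⦄, G.Adj u v → color u ≠ color v)
    (hX : ∃ X : Finset (Sym2 V), ↑X ⊆ G.edgeSet ∧
      (∀ v : V, color v = true → G.degree v = d → degIn G X v ≠ s) ∧
      (∀ v : V, color v = false → G.degree v = δ →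
        1 ≤ degIn G X v ∧ degIn G X v ≤ δ - 1)) :
    ∃ c : Sym2 V → Sig, SolvesFDSO G color d δ s c := by
  obtain ⟨X, -, hw, hb⟩ := hX
  have key : ∀ v : V, ∃ g : V → Sig,
      (∀ u, g u = Sig.X ∨ (g u = Sig.H ∧ s(v, u) ∈ X) ∨ (g u = Sig.T ∧ s(v, u) ∉ X)) ∧
      (color v = true → G.degree v = d →
        ((G.neighborFinset v).val.map g =
          Multiset.replicate (s + 1) Sig.H + Multiset.replicate (d - s - 1) Sig.X ∨
        (G.neighborFinset v).val.map g =
          Multiset.replicate (d - s + 1) Sig.T + Multiset.replicate (s - 1) Sig.X)) := by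
    intro v
    by_cases hv : color v = true ∧ G.degree v = d
    · obtain ⟨hc, hdeg⟩ := hv
      have hne := hw v hc hdeg
      have hN : (G.neighborFinset v).card = d := by rw [G.card_neighborFinset_eq_degree, hdeg]
      have hsum := Finset.card_filter_add_card_filter_not (s := G.neighborFinset v)
        (fun u => s(v, u) ∈ X)
      unfold degIn at hne
      rcases Nat.lt_or_gt_of_ne hne with hlt | hgt
      · obtain ⟨S, hS, hScard⟩ := Finset.exists_subset_card_eq
          (s := (G.neighborFinset v).filter (fun u => ¬ s(v, u) ∈ X)) (n := d - s + 1) (by omega)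
        refine ⟨fun u => if u ∈ S then Sig.T else Sig.X, fun u => ?_, fun _ _ => Or.inr ?_⟩
        · by_cases hu : u ∈ S
          · have := (Finset.mem_filter.mp (hS hu)).2
            simp [hu, this]
          · simp [hu]
        · rw [map_ite_aux _ _ (hS.trans (Finset.filter_subset _ _)), hScard, hN]
          congr 2
          omega
      · obtain ⟨S, hS, hScard⟩ := Finset.exists_subset_card_eq
          (s := (G.neighborFinset v).filter (fun u => s(v, u) ∈ X)) (n := s + 1) (by omega)
        refine ⟨fun u => if u ∈ S then Sig.H else Sig.X, fun u => ?_, fun _ _ => Or.inl ?_⟩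
        · by_cases hu : u ∈ S
          · have := (Finset.mem_filter.mp (hS hu)).2
            simp [hu, this]
          · simp [hu]
        · rw [map_ite_aux _ _ (hS.trans (Finset.filter_subset _ _)), hScard, hN]
          congr 2
    · exact ⟨fun _ => Sig.X, fun _ => Or.inl rfl, fun h1 h2 => absurd ⟨h1, h2⟩ hv⟩
  choose g hg hgw using key
  refine ⟨Sym2.lift ⟨fun a b => if color a = color b then Sig.X
      else if color a = true then g a b else g b a, ?_⟩, ?_, ?_⟩
  · intro a b
    cases ha : color a <;> cases hb' : color b <;> simp [ha, hb']
  · intro v hv hdeg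
    right
    have e : edgeLabels G (Sym2.lift ⟨fun a b => if color a = color b then Sig.X
      else if color a = true then g a b else g b a, by
        intro a b
        cases ha : color a <;> cases hb' : color b <;> simp [ha, hb']⟩) v =
        (G.neighborFinset v).val.map (g v) := by
      unfold edgeLabels
      refine Multiset.map_congr rfl fun u hu => ?_
      have hadj : G.Adj v u := by simpa using hu
      rw [Sym2.lift_mk]
      simp only [if_neg (hproper hadj), if_pos hv]
    rw [e]
    exact hgw v hv hdeg
  · intro v hv hdeg
    obtain ⟨h1, h2⟩ := hb v hv hdeg
    have hN : (G.neighborFinset v).card = δ := by rw [G.card_neighborFinset_eq_degree, hdeg]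
    have hsum := Finset.card_filter_add_card_filter_not (s := G.neighborFinset v)
      (fun u => s(v, u) ∈ X)
    unfold degIn at h1 h2
    obtain ⟨x, hx⟩ := Finset.card_pos.mp h1
    have h3 : 0 < ((G.neighborFinset v).filter (fun u => ¬ s(v, u) ∈ X)).card := by omega
    obtain ⟨y, hy⟩ := Finset.card_pos.mp h3
    obtain ⟨hxN, hxX⟩ := Finset.mem_filter.mp hx
    obtain ⟨hyN, hyX⟩ := Finset.mem_filter.mp hy
    have hm : ∀ u ∈ G.neighborFinset v,
        g u v ∈ edgeLabels G (Sym2.lift ⟨fun a b => if color a = color b then Sig.X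
          else if color a = true then g a b else g b a, by
            intro a b
            cases ha : color a <;> cases hb' : color b <;> simp [ha, hb']⟩) v := by
      intro u hu
      unfold edgeLabels
      refine Multiset.mem_map.mpr ⟨u, hu, ?_⟩
      have hadj : G.Adj v u := by simpa using hu
      rw [Sym2.lift_mk]
      simp only [if_neg (hproper hadj)]
      simp [hv]
    have mx := hm x hxN
    have my := hm y hyN
    rw [Sym2.eq_swap] at hxX hyX
    rcases hg x v with h | ⟨h, -⟩ | ⟨-, h⟩
    · left; rwa [h] at mx
    · rcases hg y v with h' | ⟨-, h'⟩ | ⟨h', -⟩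
      · left; rwa [h'] at my
      · exact absurd h' hyX
      · right
        rw [h] at mx
        rw [h'] at my
        exact ⟨mx, my⟩
    · exact absurd hxX h
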